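/- Let a > 0 be real and λ ∈ ℂ ∖ [0,∞). Then the Lebesgue integral ∫_{ℝ} sin²(ax)/(x² − λ)² dx converges and equals −(iπ/(4(√λ)³)) (1 − e^{2ia√λ}) + (πa/(2λ)) e^{2ia√λ}. -/

import Mathlib

open MeasureTheory

/-- The branch of the complex square root with positive imaginary part
(for `z ∉ [0,∞)`): `√z = i · (−z)^{1/2}` where `(−z)^{1/2}` is the principal root. -/
noncomputable def sqrtUpper (z : ℂ) : ℂ := Complex.I * (-z) ^ ((1 : ℂ) / 2)

/-! With `c = -i√λ`, so that `c² = -λ` and `Re c > 0`, the function `(1 + c|t|) e^{-c|t|}` has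
Fourier transform proportional to `1/(x² + c²)²` in the variable `x = 2πw`. Fourier inversion
evaluates `∫ e^{itx}/(x² - λ)² dx`, and `sin² (ax) = (1 - cos (2ax))/2` is a combination of
exponentials with `t = 0, ±2a`. -/

open Set FourierTransform
open Complex (exp I)
open scoped Real

section LaplaceIntegrals

variable {b : ℂ}

lemma integrableOn_pow_mul_cexp_neg_mul_Ioi (n : ℕ) (hb : 0 < b.re) :
    IntegrableOn (fun t : ℝ => (t : ℂ) ^ n * exp (-b * t)) (Ioi 0) := by
  have hreal : IntegrableOn (fun t : ℝ => t ^ (n : ℝ) * Real.exp (-b.re * t ^ (1 : ℝ))) (Ioi 0) :=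
    integrableOn_rpow_mul_exp_neg_mul_rpow (by linarith [n.cast_nonneg (α := ℝ)]) one_pos hb
  refine Integrable.mono' hreal (Continuous.aestronglyMeasurable (by fun_prop)) ?_
  filter_upwards [ae_restrict_mem measurableSet_Ioi] with t (ht : 0 < t)
  simp [Complex.norm_exp, abs_of_pos ht]

lemma integral_pow_mul_cexp_neg_mul_Ioi (n : ℕ) (hb : 0 < b.re) :
    ∫ t : ℝ in Ioi 0, (t : ℂ) ^ n * exp (-b * t) = n.factorial / b ^ (n + 1) := by
  have hb₀ : b ≠ 0 := by rintro rfl; simp at hb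
  have hint (k : ℕ) := integrableOn_pow_mul_cexp_neg_mul_Ioi k hb
  induction n with
  | zero =>
    have hexp := integral_exp_mul_complex_Ioi (a := -b) (by simpa using hb) 0
    simpa using hexp
  | succ n ih =>
    have hderiv (t : ℝ) : HasDerivAt (fun t : ℝ => (t : ℂ) ^ (n + 1) * exp (-b * t))
        ((n + 1) * ((t : ℂ) ^ n * exp (-b * t)) - b * ((t : ℂ) ^ (n + 1) * exp (-b * t))) t := by
      have hid : HasDerivAt (fun t : ℝ => (t : ℂ)) 1 t := Complex.ofRealCLM.hasDerivAt
      refine ((hid.fun_pow (n + 1)).fun_mul (hid.const_mul (-b)).cexp).congr_deriv ?_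
      push_cast [Nat.add_sub_cancel]
      ring
    have hint' := ((hint n).const_mul ((n : ℂ) + 1)).sub ((hint (n + 1)).const_mul b)
    have hlim := tendsto_zero_of_hasDerivAt_of_integrableOn_Ioi (a := 0)
      (fun t _ => hderiv t) hint' (hint (n + 1))
    have hparts := integral_Ioi_of_hasDerivAt_of_tendsto' (fun t _ => hderiv t) hint' hlim
    rw [integral_sub ((hint n).const_mul _) ((hint (n + 1)).const_mul _), integral_const_mul,
      integral_const_mul, ih, Complex.ofReal_zero, zero_pow n.succ_ne_zero, zero_mul, sub_zero,
      sub_eq_zero] at hparts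
    rw [← mul_right_inj' hb₀, ← hparts, Nat.factorial_succ]
    push_cast
    field_simp
    ring

lemma one_add_mul_mul_cexp_eq (b c : ℂ) (t : ℝ) :
    (1 + c * t) * exp (-b * t)
      = (t : ℂ) ^ 0 * exp (-b * t) + c * ((t : ℂ) ^ 1 * exp (-b * t)) := by
  ring

lemma integrableOn_one_add_mul_mul_cexp_neg_mul_Ioi (c : ℂ) (hb : 0 < b.re) :
    IntegrableOn (fun t : ℝ => (1 + c * t) * exp (-b * t)) (Ioi 0) := by
  simp only [one_add_mul_mul_cexp_eq]
  exact (integrableOn_pow_mul_cexp_neg_mul_Ioi 0 hb).add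
    ((integrableOn_pow_mul_cexp_neg_mul_Ioi 1 hb).const_mul c)

lemma integral_one_add_mul_mul_cexp_neg_mul_Ioi (c : ℂ) (hb : 0 < b.re) :
    ∫ t : ℝ in Ioi 0, (1 + c * t) * exp (-b * t) = 1 / b + c / b ^ 2 := by
  simp only [one_add_mul_mul_cexp_eq]
  rw [integral_add (integrableOn_pow_mul_cexp_neg_mul_Ioi 0 hb)
      ((integrableOn_pow_mul_cexp_neg_mul_Ioi 1 hb).const_mul c), integral_const_mul,
    integral_pow_mul_cexp_neg_mul_Ioi 0 hb, integral_pow_mul_cexp_neg_mul_Ioi 1 hb]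
  simp [div_eq_mul_inv]

end LaplaceIntegrals

section EvenExtension

variable {E : Type*} [NormedAddCommGroup E] {f : ℝ → E}

lemma integrable_comp_abs (hf : IntegrableOn f (Ioi 0)) : Integrable (fun t => f |t|) := by
  have hpos : IntegrableOn (fun t => f |t|) (Ioi 0) :=
    hf.congr_fun (fun t (ht : 0 < t) => by rw [abs_of_pos ht]) measurableSet_Ioi
  have hneg : IntegrableOn (fun t => f |t|) (Iio 0) := by
    rw [← neg_zero] at hpos
    simpa only [abs_neg] using hpos.comp_neg_Iio
  rw [← integrableOn_univ, ← Iio_union_Ici (a := (0 : ℝ)), integrableOn_union,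
    integrableOn_Ici_iff_integrableOn_Ioi]
  exact ⟨hneg, hpos⟩

lemma fourier_comp_abs [NormedSpace ℂ E] (hf : IntegrableOn f (Ioi 0)) (w : ℝ) :
    𝓕 (fun t => f |t|) w = (∫ t : ℝ in Ioi 0, exp (2 * π * w * I * t) • f t) +
      ∫ t : ℝ in Ioi 0, exp (-(2 * π * w * I) * t) • f t := by
  have hint : Integrable (fun t : ℝ => exp (-(2 * π * w * I) * t) • f |t|) := by
    refine (integrable_comp_abs hf).bdd_smul 1 (Continuous.aestronglyMeasurable (by fun_prop)) ?_
    filter_upwards with t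
    simp [Complex.norm_exp]
  calc 𝓕 (fun t => f |t|) w
    _ = ∫ t : ℝ, exp (-(2 * π * w * I) * t) • f |t| := by
      rw [Real.fourier_real_eq_integral_exp_smul]
      congr! 3
      push_cast
      ring_nf
    _ = (∫ t : ℝ in Ioi 0, exp (2 * π * w * I * t) • f |t|) +
        ∫ t : ℝ in Ioi 0, exp (-(2 * π * w * I) * t) • f |t| := by
      have hreflect := integral_comp_neg_Ioi 0
        (fun t : ℝ => exp (-(2 * π * w * I) * t) • f |t|)
      rw [neg_zero] at hreflect
      rw [← intervalIntegral.integral_Iic_add_Ioi hint.integrableOn hint.integrableOn, ← hreflect]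
      simp only [Complex.ofReal_neg, neg_mul_neg, abs_neg]
    _ = _ := by
      congr 1 <;>
        exact setIntegral_congr_fun measurableSet_Ioi fun t ht => by
          simp only [abs_of_pos (mem_Ioi.1 ht)]

end EvenExtension

section InverseSquareKernel

variable {c : ℂ}

lemma sq_re_mul_le_sq_norm_ofReal_sq_add_sq (c : ℂ) (x : ℝ) :
    c.re ^ 2 * (c.re ^ 2 + x ^ 2) ≤ ‖(x : ℂ) ^ 2 + c ^ 2‖ ^ 2 := by
  have hnorm : ‖(x : ℂ) ^ 2 + c ^ 2‖ ^ 2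
      = (c.re ^ 2 + (x + c.im) ^ 2) * (c.re ^ 2 + (x - c.im) ^ 2) := by
    rw [Complex.sq_norm, Complex.normSq_apply]
    simp [pow_two]
    ring
  rw [hnorm]
  nlinarith [sq_nonneg (c.re * x), sq_nonneg (c.re * c.im), sq_nonneg (x ^ 2 - c.im ^ 2)]

lemma ofReal_sq_add_sq_ne_zero (hc : c.re ≠ 0) (x : ℝ) : (x : ℂ) ^ 2 + c ^ 2 ≠ 0 := by
  have hpos : 0 < c.re ^ 2 * (c.re ^ 2 + x ^ 2) := by positivity
  have hnorm := hpos.trans_le (sq_re_mul_le_sq_norm_ofReal_sq_add_sq c x)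
  exact norm_ne_zero_iff.1 (pow_ne_zero_iff two_ne_zero |>.1 hnorm.ne')

lemma integrable_inv_sq_add_sq_sq (hc : c.re ≠ 0) :
    Integrable (fun x : ℝ => (((x : ℂ) ^ 2 + c ^ 2) ^ 2)⁻¹) := by
  have hcont : Continuous (fun x : ℝ => (((x : ℂ) ^ 2 + c ^ 2) ^ 2)⁻¹) :=
    Continuous.inv₀ (by fun_prop) fun x => pow_ne_zero 2 (ofReal_sq_add_sq_ne_zero hc x)
  have hmajorant : Integrable (fun x : ℝ => (c.re ^ 4)⁻¹ * (1 + (x / c.re) ^ 2)⁻¹) :=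
    (integrable_inv_one_add_sq.comp_div hc).const_mul _
  refine hmajorant.mono' hcont.aestronglyMeasurable ?_
  filter_upwards with x
  rw [norm_inv, norm_pow, ← mul_inv]
  refine inv_anti₀ (by positivity) (le_of_eq_of_le ?_ (sq_re_mul_le_sq_norm_ofReal_sq_add_sq c x))
  field_simp

/-- The function `t ↦ (1 + c|t|) e^{-c|t|}`, which for real `c > 0` is the Matérn covariance
function of smoothness `3/2`. It serves as the Fourier preimage of `1/(x² + c²)²`. -/
noncomputable def matern (c : ℂ) (t : ℝ) : ℂ := (1 + c * (|t| : ℝ)) * exp (-c * (|t| : ℝ))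

lemma continuous_matern (c : ℂ) : Continuous (matern c) := by
  unfold matern
  fun_prop

lemma integrable_matern (hc : 0 < c.re) : Integrable (matern c) :=
  integrable_comp_abs (integrableOn_one_add_mul_mul_cexp_neg_mul_Ioi c hc)

lemma fourier_matern (hc : 0 < c.re) (w : ℝ) :
    𝓕 (matern c) w = 4 * c ^ 3 * ((((2 * π * w : ℝ) : ℂ) ^ 2 + c ^ 2) ^ 2)⁻¹ := by
  set z : ℂ := 2 * π * w * I with hz
  have hz_sq : ((2 * π * w : ℝ) : ℂ) ^ 2 = -z ^ 2 := by
    rw [hz, mul_pow _ I, Complex.I_sq]; push_cast; ring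
  have hz_re : z.re = 0 := by simp [hz]
  have hsub : 0 < (c - z).re := by simpa [hz_re] using hc
  have hadd : 0 < (c + z).re := by simpa [hz_re] using hc
  have hsub₀ : c - z ≠ 0 := fun h => by simp [h] at hsub
  have hadd₀ : c + z ≠ 0 := fun h => by simp [h] at hadd
  have hshift (y : ℂ) (t : ℝ) :
      exp (y * t) • ((1 + c * t) * exp (-c * t)) = (1 + c * t) * exp (-(c - y) * t) := by
    rw [smul_eq_mul, mul_left_comm, ← Complex.exp_add]
    ring_nf
  calc 𝓕 (matern c) w
    _ = (∫ t : ℝ in Ioi 0, (1 + c * t) * exp (-(c - z) * t)) +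
        ∫ t : ℝ in Ioi 0, (1 + c * t) * exp (-(c + z) * t) := by
      refine (fourier_comp_abs (integrableOn_one_add_mul_mul_cexp_neg_mul_Ioi c hc) w).trans ?_
      simp only [← hz, hshift, sub_neg_eq_add]
    _ = (1 / (c - z) + c / (c - z) ^ 2) + (1 / (c + z) + c / (c + z) ^ 2) := by
      rw [integral_one_add_mul_mul_cexp_neg_mul_Ioi c hsub,
        integral_one_add_mul_mul_cexp_neg_mul_Ioi c hadd]
    _ = 4 * c ^ 3 * (((c - z) * (c + z)) ^ 2)⁻¹ := by
      field_simp
      ring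
    _ = 4 * c ^ 3 * ((((2 * π * w : ℝ) : ℂ) ^ 2 + c ^ 2) ^ 2)⁻¹ := by
      rw [hz_sq]
      ring_nf

lemma integrable_fourier_matern (hc : 0 < c.re) : Integrable (𝓕 (matern c)) := by
  rw [funext (fourier_matern hc)]
  exact ((integrable_inv_sq_add_sq_sq hc.ne').comp_mul_left' Real.two_pi_pos.ne').const_mul _

lemma matern_eq_integral (hc : 0 < c.re) (t : ℝ) :
    matern c t
      = 2 * c ^ 3 / π * ∫ x : ℝ, exp (t * x * I) * (((x : ℂ) ^ 2 + c ^ 2) ^ 2)⁻¹ := by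
  let g (x : ℝ) : ℂ := exp (t * x * I) * (((x : ℂ) ^ 2 + c ^ 2) ^ 2)⁻¹
  calc matern c t
    _ = 𝓕⁻ (𝓕 (matern c)) t :=
      ((integrable_matern hc).fourierInv_fourier_eq (integrable_fourier_matern hc)
        (continuous_matern c).continuousAt).symm
    _ = 4 * c ^ 3 * ∫ w : ℝ, g (2 * π * w) := by
      rw [funext (fourier_matern hc), Real.fourierInv_eq', ← integral_const_mul]
      congr! 2
      simp only [g, smul_eq_mul, RCLike.inner_apply, conj_trivial]
      push_cast
      ring_nf
    _ = 4 * c ^ 3 * ((2 * π : ℝ)⁻¹ • ∫ x : ℝ, g x) := by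
      rw [Measure.integral_comp_mul_left, abs_of_pos (inv_pos.2 Real.two_pi_pos)]
    _ = 2 * c ^ 3 / π * ∫ x : ℝ, g x := by
      rw [Complex.real_smul]
      push_cast
      ring

lemma integral_cexp_mul_inv_sq_add_sq_sq (hc : 0 < c.re) (t : ℝ) :
    ∫ x : ℝ, exp (t * x * I) * (((x : ℂ) ^ 2 + c ^ 2) ^ 2)⁻¹ = π / (2 * c ^ 3) * matern c t := by
  have hc₀ : c ≠ 0 := by rintro rfl; simp at hc
  have hπ : (π : ℂ) ≠ 0 := mod_cast Real.pi_ne_zero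
  have hconst : π / (2 * c ^ 3) * (2 * c ^ 3 / π) = 1 := by field_simp
  rw [matern_eq_integral hc, ← mul_assoc, hconst, one_mul]

lemma integrable_cexp_mul_inv_sq_add_sq_sq (hc : c.re ≠ 0) (t : ℝ) :
    Integrable (fun x : ℝ => exp (t * x * I) * (((x : ℂ) ^ 2 + c ^ 2) ^ 2)⁻¹) := by
  refine (integrable_inv_sq_add_sq_sq hc).bdd_mul (c := 1)
    (Continuous.aestronglyMeasurable (by fun_prop)) ?_
  filter_upwards with x
  simp [Complex.norm_exp]

lemma cos_mul_eq_cexp (t x : ℝ) (k : ℂ) :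
    (Real.cos (t * x) : ℂ) * k
      = 1 / 2 * (exp (t * x * I) * k + exp ((-t : ℝ) * x * I) * k) := by
  rw [Complex.ofReal_cos, Complex.cos]
  push_cast
  ring_nf

lemma integrable_cos_mul_inv_sq_add_sq_sq (hc : c.re ≠ 0) (t : ℝ) :
    Integrable (fun x : ℝ => (Real.cos (t * x) : ℂ) * (((x : ℂ) ^ 2 + c ^ 2) ^ 2)⁻¹) := by
  simp only [cos_mul_eq_cexp]
  exact ((integrable_cexp_mul_inv_sq_add_sq_sq hc t).add
    (integrable_cexp_mul_inv_sq_add_sq_sq hc (-t))).const_mul _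

lemma integral_cos_mul_inv_sq_add_sq_sq (hc : 0 < c.re) (t : ℝ) :
    ∫ x : ℝ, (Real.cos (t * x) : ℂ) * (((x : ℂ) ^ 2 + c ^ 2) ^ 2)⁻¹
      = π / (2 * c ^ 3) * matern c t := by
  have hmatern_neg : matern c (-t) = matern c t := by simp only [matern, abs_neg]
  simp only [cos_mul_eq_cexp]
  rw [integral_const_mul, integral_add (integrable_cexp_mul_inv_sq_add_sq_sq hc.ne' t)
      (integrable_cexp_mul_inv_sq_add_sq_sq hc.ne' (-t)),
    integral_cexp_mul_inv_sq_add_sq_sq hc, integral_cexp_mul_inv_sq_add_sq_sq hc, hmatern_neg]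
  ring

lemma sin_sq_mul_eq_cos_sub_cos (a x : ℝ) (k : ℂ) :
    (Real.sin (a * x) : ℂ) ^ 2 * k
      = 1 / 2 * ((Real.cos (0 * x) : ℂ) * k - (Real.cos (2 * a * x) : ℂ) * k) := by
  rw [← Complex.ofReal_pow, Real.sin_sq_eq_half_sub, mul_assoc 2 a x]
  push_cast [zero_mul, Real.cos_zero]
  ring

lemma integrable_sin_sq_mul_inv_sq_add_sq_sq (hc : c.re ≠ 0) (a : ℝ) :
    Integrable (fun x : ℝ => (Real.sin (a * x) : ℂ) ^ 2 * (((x : ℂ) ^ 2 + c ^ 2) ^ 2)⁻¹) := by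
  simp only [sin_sq_mul_eq_cos_sub_cos]
  exact ((integrable_cos_mul_inv_sq_add_sq_sq hc 0).sub
    (integrable_cos_mul_inv_sq_add_sq_sq hc (2 * a))).const_mul _

lemma integral_sin_sq_mul_inv_sq_add_sq_sq (hc : 0 < c.re) (a : ℝ) :
    ∫ x : ℝ, (Real.sin (a * x) : ℂ) ^ 2 * (((x : ℂ) ^ 2 + c ^ 2) ^ 2)⁻¹
      = π / (4 * c ^ 3) * (1 - matern c (2 * a)) := by
  have hmatern_zero : matern c 0 = 1 := by simp [matern]
  simp only [sin_sq_mul_eq_cos_sub_cos]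
  rw [integral_const_mul, integral_sub (integrable_cos_mul_inv_sq_add_sq_sq hc.ne' 0)
      (integrable_cos_mul_inv_sq_add_sq_sq hc.ne' (2 * a)),
    integral_cos_mul_inv_sq_add_sq_sq hc, integral_cos_mul_inv_sq_add_sq_sq hc, hmatern_zero]
  ring

end InverseSquareKernel

lemma sqrtUpper_eq_I_mul_sqrt (z : ℂ) : sqrtUpper z = I * (-z).sqrt := by
  rw [sqrtUpper, Complex.sqrt, one_div]

lemma sqrtUpper_sq (z : ℂ) : sqrtUpper z ^ 2 = z := by
  rw [sqrtUpper_eq_I_mul_sqrt, mul_pow, Complex.I_sq, Complex.sqrt,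
    Complex.cpow_ofNat_inv_pow]
  ring

lemma re_sqrt_pos {z : ℂ} (hz : z ∈ Complex.slitPlane) : 0 < z.sqrt.re := by
  rw [Complex.sqrt, Complex.cpow_inv_two_re, Real.sqrt_pos]
  rcases Complex.mem_slitPlane_iff.1 hz with hre | him
  · positivity
  · linarith [neg_abs_le z.re, Complex.abs_re_lt_norm.2 him]

lemma im_sqrtUpper_pos {z : ℂ} (hz : ∀ t : ℝ, 0 ≤ t → z ≠ t) : 0 < (sqrtUpper z).im := by
  have hslit : -z ∈ Complex.slitPlane := by
    rw [Complex.mem_slitPlane_iff]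
    by_contra! ⟨hre, him⟩
    exact hz z.re (by simpa using hre) (Complex.ext (by simp) (by simpa using him))
  simpa [sqrtUpper_eq_I_mul_sqrt] using re_sqrt_pos hslit

/-- For real `a > 0` and `λ ∉ [0,∞)`, the Lebesgue integral
`∫_ℝ sin²(ax)/(x² − λ)² dx` converges and equals
`−(iπ/(4(√λ)³))(1 − e^{2ia√λ}) + (πa/(2λ)) e^{2ia√λ}`. -/
theorem stmt8 (a : ℝ) (ha : 0 < a) (lam : ℂ) (hlam : ∀ t : ℝ, 0 ≤ t → lam ≠ (t : ℂ)) :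
    Integrable (fun x : ℝ => (Real.sin (a * x) : ℂ) ^ 2 * (((x : ℂ) ^ 2 - lam) ^ 2)⁻¹) ∧
    ∫ x : ℝ, (Real.sin (a * x) : ℂ) ^ 2 * (((x : ℂ) ^ 2 - lam) ^ 2)⁻¹
      = -(Complex.I * (Real.pi : ℂ) / (4 * (sqrtUpper lam) ^ 3)) *
          (1 - Complex.exp (2 * Complex.I * (a : ℂ) * sqrtUpper lam))
        + (Real.pi : ℂ) * (a : ℂ) / (2 * lam) *
            Complex.exp (2 * Complex.I * (a : ℂ) * sqrtUpper lam) := by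
  set μ := sqrtUpper lam
  have hμ_sq : μ ^ 2 = lam := sqrtUpper_sq lam
  have hμ_im : 0 < μ.im := im_sqrtUpper_pos hlam
  have hμ₀ : μ ≠ 0 := fun h => by simp [h] at hμ_im
  have hc : 0 < (-I * μ).re := by simpa using hμ_im
  have hker (x : ℝ) : (x : ℂ) ^ 2 - lam = (x : ℂ) ^ 2 + (-I * μ) ^ 2 := by
    rw [mul_pow, neg_sq, Complex.I_sq, hμ_sq]
    ring
  have hcube : (-I * μ) ^ 3 = I * μ ^ 3 := by
    linear_combination -I * μ ^ 3 * Complex.I_sq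
  have hmatern : matern (-I * μ) (2 * a) = (1 - 2 * I * a * μ) * exp (2 * I * a * μ) := by
    rw [matern, abs_of_pos (mul_pos two_pos ha)]
    push_cast
    ring_nf
  simp only [hker]
  refine ⟨integrable_sin_sq_mul_inv_sq_add_sq_sq hc.ne' a, ?_⟩
  rw [integral_sin_sq_mul_inv_sq_add_sq_sq hc, hcube, hmatern, ← hμ_sq]
  field_simp
  linear_combination (2 - 2 * exp (I * μ * 2 * a)) * Complex.I_sq
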